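/- arXiv:2202.02844 — 2 statements merged into one kernel-verified Lean document; each statement's English description precedes it below -/
import Mathlib

section
/- Let R be a finite commutative Gorenstein ring. Then: (a) for every R-module A, and for any generator φ of R^dual as an R-module, the map Hom_R(A,R) → Hom_ℤ(A, ℚ/ℤ) given by ψ ↦ φ∘ψ is an isomorphism of R-modules; in particular, if A is finite then #A = #Hom_R(A,R). (b) The contravariant functor A ↦ Hom_R(A,R) from finite R-modules to finite R-modules is exact: it sends short exact sequences of finite R-modules to short exact sequences. -/
/-!
Let `R` be a finite commutative ring. For an `R`-module `A` set `A^⊥ = Hom_R(A, R)` and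
`A^dual = Hom_ℤ(A, ℚ/ℤ)` (the character module `CharacterModule A`), both `R`-modules via
`(rφ)(a) = φ(ra)`. `R` is Gorenstein if `R^dual` is a free `R`-module of rank one,
i.e. `R ≃ₗ[R] R^dual`.
-/

/-- Repackage an additive homomorphism `A →+ ℚ/ℤ` as an element of `CharacterModule A`. -/
def toChar {A : Type*} [AddCommGroup A] (f : A →+ AddCircle (1 : ℚ)) : CharacterModule A := f

/-!
Let `e : R ≃ R^dual`. Tensor-hom adjunction turns `Hom(A, R) ≃ Hom(A, R^dual)` into
`(A ⊗ R)^dual ≃ A^dual`, and the composite sends `ψ` to `e 1 ∘ ψ`. A generator `φ` of `R^dual` is of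
the form `e 1`, because a surjective endomorphism of a finite module over a commutative ring is
injective. Exactness holds because `R ≃ R^dual` is an injective module, being the character module
of a flat one. For finite `A`, duality of finite abelian groups gives `#A^dual = #A`, because the
`n`-torsion of `ℚ/ℤ` is cyclic of order `n`.
-/

universe u v w x

theorem addCircle_hasEnoughRootsOfUnity {𝕜 : Type*} [Field 𝕜] [LinearOrder 𝕜]
    [IsStrictOrderedRing 𝕜] (p : 𝕜) [Fact (0 < p)] (n : ℕ) [NeZero n] :
    HasEnoughRootsOfUnity (Multiplicative (AddCircle p)) n := by
  have n_pos : 0 < n := NeZero.pos n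
  have generator_primitive :
      IsPrimitiveRoot (Multiplicative.ofAdd ((p / n : 𝕜) : AddCircle p)) n := by
    rw [IsPrimitiveRoot.iff_orderOf, orderOf_ofAdd_eq_addOrderOf,
      AddCircle.addOrderOf_period_div n_pos]
  refine ⟨⟨_, generator_primitive⟩, ⟨generator_primitive.toRootsOfUnity, fun u => ?_⟩⟩
  have torsion : n • (u : (Multiplicative (AddCircle p))ˣ).val.toAdd = 0 :=
    congrArg (fun z : (Multiplicative (AddCircle p))ˣ => z.val.toAdd) u.2
  obtain ⟨m, -, hm⟩ := (AddCircle.nsmul_eq_zero_iff n_pos).1 torsion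
  refine ⟨m, Subtype.ext (Units.ext (Multiplicative.toAdd.injective ?_))⟩
  rw [AddCircle.natCast_div_mul_eq_nsmul] at hm
  simpa using hm

theorem natCard_characterModule (A : Type*) [AddCommGroup A] [Finite A] :
    Nat.card (CharacterModule A) = Nat.card A := by
  have : NeZero (Monoid.exponent (Multiplicative A)) := ⟨Monoid.exponent_ne_zero_of_finite⟩
  have := addCircle_hasEnoughRootsOfUnity (1 : ℚ) (Monoid.exponent (Multiplicative A))
  let toUnitsHom : CharacterModule A ≃
      (Multiplicative A →* (Multiplicative (AddCircle (1 : ℚ)))ˣ) :=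
    AddMonoidHom.toMultiplicative.trans toUnits.monoidHomCongrRight.toEquiv
  calc Nat.card (CharacterModule A)
      = Nat.card (Multiplicative A →* (Multiplicative (AddCircle (1 : ℚ)))ˣ) :=
        Nat.card_congr toUnitsHom
    _ = Nat.card (Multiplicative A) := CommGroup.card_monoidHom_of_hasEnoughRootsOfUnity _ _
    _ = Nat.card A := Nat.card_congr Multiplicative.toAdd

theorem bijective_toSpanSingleton_of_span_eq_top {R M : Type*} [Semiring R] [OrzechProperty R]
    [AddCommMonoid M] [Module R M] (e : R ≃ₗ[R] M) {m : M} (hm : Submodule.span R {m} = ⊤) :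
    Function.Bijective (LinearMap.toSpanSingleton R M m) := by
  have surjective : Function.Surjective (LinearMap.toSpanSingleton R M m) :=
    fun y => Submodule.mem_span_singleton.1 (hm ▸ Submodule.mem_top)
  have : Module.Finite R M := Module.Finite.equiv e
  exact OrzechProperty.bijective_of_surjective_of_injective e.toLinearMap _ e.injective surjective

section SelfDual

variable {R : Type*} [CommRing R] {A : Type*} [AddCommGroup A] [Module R A]

/-- For a ring `R` that is isomorphic to its character module, the duality `Hom_R(A, R) ≃ A^dual`
which corresponds to `e`; it is composition with the character `e 1`. -/
noncomputable def homEquivCharacterModule (e : R ≃ₗ[R] CharacterModule R) :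
    (A →ₗ[R] R) ≃ₗ[R] CharacterModule A :=
  e.congrRight ≪≫ₗ CharacterModule.homEquiv ≪≫ₗ CharacterModule.congr (TensorProduct.rid R A)

theorem homEquivCharacterModule_apply (e : R ≃ₗ[R] CharacterModule R) (ψ : A →ₗ[R] R) :
    homEquivCharacterModule e ψ = CharacterModule.dual ψ (e 1) := by
  ext a
  calc homEquivCharacterModule e ψ a
      = e (ψ a) 1 := rfl
    _ = (ψ a • e 1) 1 := by rw [← map_smul, smul_eq_mul, mul_one]
    _ = e 1 (ψ a) := by rw [CharacterModule.smul_apply, smul_eq_mul, mul_one]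

theorem exists_linearEquiv_eq_dual_apply (e : R ≃ₗ[R] CharacterModule R)
    {φ : CharacterModule R} (hφ : Submodule.span R {φ} = ⊤) :
    ∃ E : (A →ₗ[R] R) ≃ₗ[R] CharacterModule A, ∀ ψ, E ψ = CharacterModule.dual ψ φ := by
  let eφ := LinearEquiv.ofBijective _ (bijective_toSpanSingleton_of_span_eq_top e hφ)
  have eφ_one : eφ 1 = φ := one_smul R φ
  exact ⟨homEquivCharacterModule eφ, fun ψ => by rw [homEquivCharacterModule_apply, eφ_one]⟩

theorem baer_self_of_equiv_characterModule (e : R ≃ₗ[R] CharacterModule R) : Module.Baer R R :=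
  (Module.Flat.iff_characterModule_baer.1 inferInstance).of_equiv e.symm

end SelfDual

theorem gorenstein_dual_iso_and_exact_general
    (R : Type u) [CommRing R] (hGor : Nonempty (R ≃ₗ[R] CharacterModule R)) :
    (∀ (A : Type v) [AddCommGroup A] [Module R A],
      ∀ φ : CharacterModule R, Submodule.span R {φ} = ⊤ →
        (∀ ψ ψ' : A →ₗ[R] R,
            toChar (φ.comp (ψ + ψ').toAddMonoidHom) =
              toChar (φ.comp ψ.toAddMonoidHom) + toChar (φ.comp ψ'.toAddMonoidHom)) ∧
        (∀ (r : R) (ψ : A →ₗ[R] R),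
            toChar (φ.comp (r • ψ).toAddMonoidHom) =
              r • toChar (φ.comp ψ.toAddMonoidHom)) ∧
        Function.Bijective
          (fun ψ : A →ₗ[R] R => toChar (φ.comp ψ.toAddMonoidHom))) ∧
    (∀ (A : Type v) [AddCommGroup A] [Module R A], Finite A →
        Nat.card A = Nat.card (A →ₗ[R] R)) ∧
    (∀ (A : Type v) (B : Type w) (C : Type x) [AddCommGroup A] [Module R A]
        [AddCommGroup B] [Module R B] [AddCommGroup C] [Module R C]
        (f : A →ₗ[R] B) (g : B →ₗ[R] C),
        Function.Injective f → Function.Exact f g → Function.Surjective g →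
          (Function.Injective (fun ψ : C →ₗ[R] R => ψ.comp g) ∧
           Function.Exact (fun ψ : C →ₗ[R] R => ψ.comp g)
             (fun ψ : B →ₗ[R] R => ψ.comp f) ∧
           Function.Surjective (fun ψ : B →ₗ[R] R => ψ.comp f))) := by
  obtain ⟨e⟩ := hGor
  refine ⟨fun A _ _ φ hφ => ?_, fun A _ _ _ => ?_, fun A B C _ _ _ _ _ _ f g hf hfg hg => ?_⟩
  · obtain ⟨E, hE⟩ := exists_linearEquiv_eq_dual_apply (A := A) e hφ
    have comp_eq (ψ : A →ₗ[R] R) : toChar (φ.comp ψ.toAddMonoidHom) = E ψ := (hE ψ).symm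
    simp only [comp_eq]
    exact ⟨map_add E, map_smul E, E.bijective⟩
  · rw [← natCard_characterModule A, Nat.card_congr (homEquivCharacterModule e (A := A)).toEquiv]
  · exact ⟨LinearMap.lcomp_injective_of_surjective (N := R) (S := R) g hg,
      LinearMap.exact_lcomp_of_exact_of_surjective R hfg hg,
      (baer_self_of_equiv_characterModule e).extension_property f hf⟩

/-- **(a)** For a finite commutative Gorenstein ring `R`, every `R`-module `A`, and every
generator `φ` of `R^dual` as an `R`-module, the map `Hom_R(A,R) → Hom_ℤ(A, ℚ/ℤ)`,
`ψ ↦ φ ∘ ψ`, is an isomorphism of `R`-modules; in particular `#A = #Hom_R(A,R)` for finite `A`.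
**(b)** The contravariant functor `A ↦ Hom_R(A,R)` on finite `R`-modules is exact: it sends
short exact sequences of finite `R`-modules to short exact sequences. -/
theorem gorenstein_dual_iso_and_exact
    (R : Type*) [CommRing R] [Finite R]
    (hGor : Nonempty (R ≃ₗ[R] CharacterModule R)) :
    -- (a) : `ψ ↦ φ ∘ ψ` is an isomorphism of `R`-modules `Hom_R(A,R) ≃ Hom_ℤ(A, ℚ/ℤ)`
    (∀ (A : Type) [AddCommGroup A] [Module R A],
      ∀ φ : CharacterModule R, Submodule.span R {φ} = ⊤ →
        (∀ ψ ψ' : A →ₗ[R] R,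
            toChar (φ.comp (ψ + ψ').toAddMonoidHom) =
              toChar (φ.comp ψ.toAddMonoidHom) + toChar (φ.comp ψ'.toAddMonoidHom)) ∧
        (∀ (r : R) (ψ : A →ₗ[R] R),
            toChar (φ.comp (r • ψ).toAddMonoidHom) =
              r • toChar (φ.comp ψ.toAddMonoidHom)) ∧
        Function.Bijective
          (fun ψ : A →ₗ[R] R => toChar (φ.comp ψ.toAddMonoidHom))) ∧
    -- (a), "in particular": `#A = #A^⊥` for finite `A`
    (∀ (A : Type) [AddCommGroup A] [Module R A], Finite A →
        Nat.card A = Nat.card (A →ₗ[R] R)) ∧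
    -- (b) : exactness of the duality functor on finite `R`-modules
    (∀ (A B C : Type) [AddCommGroup A] [Module R A] [AddCommGroup B] [Module R B]
        [AddCommGroup C] [Module R C], Finite A → Finite B → Finite C →
      ∀ (f : A →ₗ[R] B) (g : B →ₗ[R] C),
        Function.Injective f → Function.Exact f g → Function.Surjective g →
          (Function.Injective (fun ψ : C →ₗ[R] R => ψ.comp g) ∧
           Function.Exact (fun ψ : C →ₗ[R] R => ψ.comp g)
             (fun ψ : B →ₗ[R] R => ψ.comp f) ∧
           Function.Surjective (fun ψ : B →ₗ[R] R => ψ.comp f))) := by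
  obtain ⟨iso, card_eq, exact_dual⟩ := gorenstein_dual_iso_and_exact_general R hGor
  exact ⟨iso, card_eq, fun A B C _ _ _ _ _ _ _ _ _ => exact_dual A B C⟩
end

section
/- Let R be a finite commutative Gorenstein ring and let A be a finite R-module. If there exists r ∈ R such that r·Hom_R(A,R) = 0, then rA = 0. -/
/-!
Let `R` be a finite commutative ring. For an `R`-module `A` set `A^⊥ = Hom_R(A, R)` and
`A^dual = Hom_ℤ(A, ℚ/ℤ)` (the character module `CharacterModule A`), both `R`-modules.
`R` is Gorenstein if `R^dual` is a free `R`-module of rank one, i.e. `R ≃ₗ[R] R^dual`.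
-/

/-!
Characters of `A` separate points, and by the tensor-hom adjunction they are the same thing as
`R`-linear maps `A → R^dual`. So if `R^dual` is torsionless (embeds in its double `R`-dual), then
so is `A`, and a scalar killing `A^⊥` kills `A^⊥⊥ ⊇ A`. Over a Gorenstein ring `R^dual` is
torsionless because it is free of rank one; over an arbitrary field every module is.
-/

open Module

theorem annihilator_le_annihilator_linearMap (R A M : Type*) [CommSemiring R]
    [AddCommMonoid A] [Module R A] [AddCommMonoid M] [Module R M] :
    annihilator R A ≤ annihilator R (A →ₗ[R] M) := by
  refine fun r hr ↦ mem_annihilator.mpr fun f ↦ LinearMap.ext fun a ↦ ?_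
  rw [LinearMap.smul_apply, ← map_smul, mem_annihilator.mp hr a, map_zero, LinearMap.zero_apply]

theorem annihilator_dual_eq_of_dual_eval_injective {R A : Type*} [CommSemiring R]
    [AddCommMonoid A] [Module R A] (hA : Function.Injective (Dual.eval R A)) :
    annihilator R (Dual R A) = annihilator R A :=
  le_antisymm
    ((annihilator_le_annihilator_linearMap R (Dual R A) R).trans
      ((Dual.eval R A).annihilator_le_of_injective hA))
    (annihilator_le_annihilator_linearMap R A R)

section

variable {R A : Type*} [CommRing R] [AddCommGroup A] [Module R A]

theorem eq_zero_of_forall_linearMap_characterModule {a : A}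
    (h : ∀ ψ : A →ₗ[R] CharacterModule R, ψ a = 0) : a = 0 := by
  refine CharacterModule.eq_zero_of_character_apply fun c ↦ ?_
  let ψ : A →ₗ[R] CharacterModule R :=
    CharacterModule.curry (CharacterModule.dual (TensorProduct.rid R A).toLinearMap c)
  calc c a = c ((1 : R) • a) := by rw [one_smul]
    _ = ψ a 1 := rfl
    _ = 0 := DFunLike.congr_fun (h ψ) 1

theorem dual_eval_injective_of_characterModule
    (hR : Function.Injective (Dual.eval R (CharacterModule R))) :
    Function.Injective (Dual.eval R A) := by
  refine (injective_iff_map_eq_zero _).mpr fun a ha ↦ ?_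
  have dual_apply_eq_zero (f : Dual R A) : f a = 0 := LinearMap.congr_fun ha f
  refine eq_zero_of_forall_linearMap_characterModule (R := R) fun ψ ↦ ?_
  refine (injective_iff_map_eq_zero _).mp hR (ψ a) (LinearMap.ext fun f ↦ ?_)
  exact dual_apply_eq_zero (f ∘ₗ ψ)

theorem gorenstein_annihilator_of_dual_general
    (hR : Function.Injective (Dual.eval R (CharacterModule R)))
    (r : R) (h : ∀ ψ : A →ₗ[R] R, r • ψ = 0) (a : A) : r • a = 0 := by
  have hr : r ∈ annihilator R (Dual R A) := mem_annihilator.mpr h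
  rw [annihilator_dual_eq_of_dual_eval_injective (dual_eval_injective_of_characterModule hR)] at hr
  exact mem_annihilator.mp hr a

end

/-- If `R` is a finite commutative Gorenstein ring, `A` a finite `R`-module, and `r ∈ R`
annihilates `Hom_R(A, R)`, then `r` annihilates `A`. -/
theorem gorenstein_annihilator_of_dual
    (R : Type*) [CommRing R] [Finite R]
    (hGor : Nonempty (R ≃ₗ[R] CharacterModule R))
    (A : Type*) [AddCommGroup A] [Module R A] [Finite A]
    (r : R) (h : ∀ ψ : A →ₗ[R] R, r • ψ = 0) :
    ∀ a : A, r • a = 0 := by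
  have : IsReflexive R (CharacterModule R) := hGor.elim Module.equiv
  exact gorenstein_annihilator_of_dual_general (bijective_dual_eval R _).injective r h
end
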